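/- arXiv:1310.1781 — 4 statements merged into one kernel-verified Lean document; each statement's English description precedes it below -/
import Mathlib

section
/- Let λ ∈ ℝ with λ ≠ 0. Define the matrices U = [[0, λ m1, 1], [λ n1, 0, λ m2], [1, λ n2, 0]] and V = [[−f1 g1, g1/λ, −g1 g2], [f1/λ, −1/λ² + f1 g1 + f2 g2, g2/λ], [−f1 f2, f2/λ, −f2 g2]]. Then the zero-curvature equation ∂ₜU − ∂ₓV + U·V − V·U = 0 holds identically on ℝ² if and only if (u1, u2, v1, v2) satisfies the four-component system: ∂ₜm1 + n2 g1 g2 + m1(f2 g2 + 2 f1 g1) = 0, ∂ₜm2 − n1 g1 g2 − m2(f1 g1 + 2 f2 g2) = 0, ∂ₜn1 − m2 f1 f2 − n1(f2 g2 + 2 f1 g1) = 0, ∂ₜn2 + m1 f1 f2 + n2(f1 g1 + 2 f2 g2) = 0. -/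
/-!
The first derivatives of the auxiliary functions close up algebraically:
`∂ₓf1 = n1 - g2`, `∂ₓf2 = g1 - n2`, `∂ₓg1 = f2 - m1`, `∂ₓg2 = m2 - f1`.
Substituting these into the nine entries of the zero-curvature expression, the diagonal and the two off-diagonal
corner entries vanish identically, while the `(1,2)`, `(2,1)`, `(2,3)`, `(3,2)` entries become `lam`
times the left-hand sides of the equations for `m1`, `n1`, `m2`, `n2`. Since `lam ≠ 0`, the
equivalence follows. Smoothness of the `u`s and `v`s is what justifies the linearity and Leibniz
rules for `∂ₓ`.
-/

/-- Partial derivative with respect to the first (space) variable. -/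
noncomputable def pX (f : ℝ × ℝ → ℝ) : ℝ × ℝ → ℝ :=
  fun p => deriv (fun x => f (x, p.2)) p.1

/-- Partial derivative with respect to the second (time) variable. -/
noncomputable def pT (f : ℝ × ℝ → ℝ) : ℝ × ℝ → ℝ :=
  fun p => deriv (fun t => f (p.1, t)) p.2

/-- A smooth function has `pX f p` as its genuine derivative along the horizontal line. -/
lemma hasDerivAt_pX {f : ℝ × ℝ → ℝ} (hf : ContDiff ℝ (⊤ : ℕ∞) f) (p : ℝ × ℝ) :
    HasDerivAt (fun x => f (x, p.2)) (pX f p) p.1 := by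
  have h : Differentiable ℝ (fun x : ℝ => f (x, p.2)) :=
    (hf.differentiable (by simp)).comp (by fun_prop)
  exact (h p.1).hasDerivAt

lemma pX_eq_fderiv {f : ℝ × ℝ → ℝ} (hf : ContDiff ℝ (⊤ : ℕ∞) f) :
    pX f = fun p => fderiv ℝ f p (1, 0) := by
  funext p
  have h1 : HasFDerivAt f (fderiv ℝ f p) (p.1, p.2) :=
    (hf.differentiable (by simp) p).hasFDerivAt
  have h2 : HasDerivAt (fun x : ℝ => (x, p.2)) ((1 : ℝ), (0 : ℝ)) p.1 :=
    (hasDerivAt_id p.1).prodMk (hasDerivAt_const p.1 p.2)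
  exact (h1.comp_hasDerivAt p.1 h2).deriv

lemma contDiff_pX {f : ℝ × ℝ → ℝ} (hf : ContDiff ℝ (⊤ : ℕ∞) f) :
    ContDiff ℝ (⊤ : ℕ∞) (pX f) := by
  rw [pX_eq_fderiv hf]
  exact (hf.fderiv_right (by simp)).clm_apply contDiff_const

lemma pT_const_mul (c : ℝ) (f : ℝ × ℝ → ℝ) (p : ℝ × ℝ) :
    pT (fun q => c * f q) p = c * pT f p := by
  simp [pT]

lemma pT_const (c : ℝ) (p : ℝ × ℝ) : pT (fun _ => c) p = 0 := by
  simp [pT]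

lemma pX_div_const (c : ℝ) (f : ℝ × ℝ → ℝ) (p : ℝ × ℝ) :
    pX (fun q => f q / c) p = pX f p / c := by
  simp [pX]

lemma pX_neg_mul {f g : ℝ × ℝ → ℝ} (hf : ContDiff ℝ (⊤ : ℕ∞) f) (hg : ContDiff ℝ (⊤ : ℕ∞) g)
    (p : ℝ × ℝ) : pX (fun q => -(f q * g q)) p = -(pX f p * g p + f p * pX g p) :=
  ((hasDerivAt_pX hf p).mul (hasDerivAt_pX hg p)).neg.deriv

/-- The `x`-derivative of the central entry of `V`. -/
lemma pX_const_add_mul_add_mul (c : ℝ) {f g h k : ℝ × ℝ → ℝ} (hf : ContDiff ℝ (⊤ : ℕ∞) f)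
    (hg : ContDiff ℝ (⊤ : ℕ∞) g) (hh : ContDiff ℝ (⊤ : ℕ∞) h) (hk : ContDiff ℝ (⊤ : ℕ∞) k)
    (p : ℝ × ℝ) :
    pX (fun q => c + f q * g q + h q * k q) p
      = (pX f p * g p + f p * pX g p) + (pX h p * k p + h p * pX k p) :=
  ((((hasDerivAt_pX hf p).mul (hasDerivAt_pX hg p)).const_add c).add
    ((hasDerivAt_pX hh p).mul (hasDerivAt_pX hk p))).deriv

theorem stmt_0
    (u1 u2 v1 v2 : ℝ × ℝ → ℝ)
    (hu1 : ContDiff ℝ (⊤ : ℕ∞) u1) (hu2 : ContDiff ℝ (⊤ : ℕ∞) u2)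
    (hv1 : ContDiff ℝ (⊤ : ℕ∞) v1) (hv2 : ContDiff ℝ (⊤ : ℕ∞) v2)
    (lam : ℝ) (hlam : lam ≠ 0)
    (m1 m2 n1 n2 f1 f2 g1 g2 : ℝ × ℝ → ℝ)
    (hm1 : m1 = fun p => u1 p - pX (pX u1) p)
    (hm2 : m2 = fun p => u2 p - pX (pX u2) p)
    (hn1 : n1 = fun p => v1 p - pX (pX v1) p)
    (hn2 : n2 = fun p => v2 p - pX (pX v2) p)
    (hf1 : f1 = fun p => u2 p - pX v1 p)
    (hf2 : f2 = fun p => u1 p + pX v2 p)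
    (hg1 : g1 = fun p => v2 p + pX u1 p)
    (hg2 : g2 = fun p => v1 p - pX u2 p)
    (U V : ℝ × ℝ → Matrix (Fin 3) (Fin 3) ℝ)
    (hU : U = fun p => !![0, lam * m1 p, 1;
                          lam * n1 p, 0, lam * m2 p;
                          1, lam * n2 p, 0])
    (hV : V = fun p => !![-(f1 p * g1 p), g1 p / lam, -(g1 p * g2 p);
                          f1 p / lam, -(1 / lam ^ 2) + f1 p * g1 p + f2 p * g2 p, g2 p / lam;
                          -(f1 p * f2 p), f2 p / lam, -(f2 p * g2 p)]) :
    (∀ p : ℝ × ℝ, ∀ i j : Fin 3,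
        pT (fun q => U q i j) p - pX (fun q => V q i j) p
          + (U p * V p - V p * U p) i j = 0)
    ↔
    (∀ p : ℝ × ℝ,
        pT m1 p + n2 p * g1 p * g2 p + m1 p * (f2 p * g2 p + 2 * f1 p * g1 p) = 0 ∧
        pT m2 p - n1 p * g1 p * g2 p - m2 p * (f1 p * g1 p + 2 * f2 p * g2 p) = 0 ∧
        pT n1 p - m2 p * f1 p * f2 p - n1 p * (f2 p * g2 p + 2 * f1 p * g1 p) = 0 ∧
        pT n2 p + m1 p * f1 p * f2 p + n2 p * (f1 p * g1 p + 2 * f2 p * g2 p) = 0) := by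
  have cf1 : ContDiff ℝ (⊤ : ℕ∞) f1 := by rw [hf1]; exact hu2.sub (contDiff_pX hv1)
  have cf2 : ContDiff ℝ (⊤ : ℕ∞) f2 := by rw [hf2]; exact hu1.add (contDiff_pX hv2)
  have cg1 : ContDiff ℝ (⊤ : ℕ∞) g1 := by rw [hg1]; exact hv2.add (contDiff_pX hu1)
  have cg2 : ContDiff ℝ (⊤ : ℕ∞) g2 := by rw [hg2]; exact hv1.sub (contDiff_pX hu2)
  have df1 : ∀ p, pX f1 p = n1 p - g2 p := fun p => by
    have h : pX f1 p = pX u2 p - pX (pX v1) p := by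
      rw [hf1]
      exact ((hasDerivAt_pX hu2 p).sub (hasDerivAt_pX (contDiff_pX hv1) p)).deriv
    rw [h, hn1, hg2]; ring
  have df2 : ∀ p, pX f2 p = g1 p - n2 p := fun p => by
    have h : pX f2 p = pX u1 p + pX (pX v2) p := by
      rw [hf2]
      exact ((hasDerivAt_pX hu1 p).add (hasDerivAt_pX (contDiff_pX hv2) p)).deriv
    rw [h, hn2, hg1]; ring
  have dg1 : ∀ p, pX g1 p = f2 p - m1 p := fun p => by
    have h : pX g1 p = pX v2 p + pX (pX u1) p := by
      rw [hg1]
      exact ((hasDerivAt_pX hv2 p).add (hasDerivAt_pX (contDiff_pX hu1) p)).deriv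
    rw [h, hm1, hf2]; ring
  have dg2 : ∀ p, pX g2 p = m2 p - f1 p := fun p => by
    have h : pX g2 p = pX v1 p - pX (pX u2) p := by
      rw [hg2]
      exact ((hasDerivAt_pX hv1 p).sub (hasDerivAt_pX (contDiff_pX hu2) p)).deriv
    rw [h, hm2, hf1]; ring
  clear hm1 hm2 hn1 hn2 hf1 hf2 hg1 hg2
  refine forall_congr' fun p => ?_
  subst hU hV
  simp only [Fin.forall_fin_succ, Matrix.sub_apply, Matrix.mul_apply,
    Fin.sum_univ_three]
  simp [pT_const_mul, pT_const, pX_div_const, pX_neg_mul, pX_const_add_mul_add_mul,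
    cf1, cf2, cg1, cg2, df1, df2, dg1, dg2, -neg_add_rev]
  constructor
  · rintro ⟨⟨-, h12, -⟩, ⟨h21, -, h23⟩, -, h32, -⟩
    refine ⟨mul_left_cancel₀ hlam ?_, mul_left_cancel₀ hlam ?_, mul_left_cancel₀ hlam ?_,
      mul_left_cancel₀ hlam ?_⟩
    · rw [mul_zero, ← h12]; field_simp; ring
    · rw [mul_zero, ← h23]; field_simp; ring
    · rw [mul_zero, ← h21]; field_simp; ring
    · rw [mul_zero, ← h32]; field_simp; ring
  · rintro ⟨h12, h23, h21, h32⟩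
    refine ⟨⟨?_, Eq.trans ?_ (mul_eq_zero_of_right lam h12), ?_⟩,
      ⟨Eq.trans ?_ (mul_eq_zero_of_right lam h21), ?_,
        Eq.trans ?_ (mul_eq_zero_of_right lam h23)⟩,
      ?_, Eq.trans ?_ (mul_eq_zero_of_right lam h32), ?_⟩
    all_goals field_simp
    all_goals ring
end

section
/- Suppose (u1, u2, v1, v2) satisfies the four-component system: ∂ₜm1 + n2 g1 g2 + m1(f2 g2 + 2 f1 g1) = 0, ∂ₜm2 − n1 g1 g2 − m2(f1 g1 + 2 f2 g2) = 0, ∂ₜn1 − m2 f1 f2 − n1(f2 g2 + 2 f1 g1) = 0, ∂ₜn2 + m1 f1 f2 + n2(f1 g1 + 2 f2 g2) = 0. Then the function m1 n1 + m2 n2 is pointwise independent of t, i.e. ∂ₜ(m1 n1 + m2 n2) = 0 identically on ℝ². -/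
lemma hasDerivAt_pT_helmholtz {u m : ℝ × ℝ → ℝ} (hu : ContDiff ℝ (⊤ : ℕ∞) u)
    (hm : m = fun p => u p - pX (pX u) p) (p : ℝ × ℝ) :
    HasDerivAt (fun t => m (p.1, t)) (pT m p) p.2 := by
  have hs : ContDiff ℝ (⊤ : ℕ∞) m := hm ▸ hu.sub (contDiff_pX (contDiff_pX hu))
  have hd : Differentiable ℝ m := hs.differentiable (by simp)
  have hc : DifferentiableAt ℝ (fun t => m (p.1, t)) p.2 := by fun_prop
  exact hc.hasDerivAt

theorem stmt_3
    (u1 u2 v1 v2 : ℝ × ℝ → ℝ)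
    (hu1 : ContDiff ℝ (⊤ : ℕ∞) u1) (hu2 : ContDiff ℝ (⊤ : ℕ∞) u2)
    (hv1 : ContDiff ℝ (⊤ : ℕ∞) v1) (hv2 : ContDiff ℝ (⊤ : ℕ∞) v2)
    (m1 m2 n1 n2 f1 f2 g1 g2 : ℝ × ℝ → ℝ)
    (hm1 : m1 = fun p => u1 p - pX (pX u1) p)
    (hm2 : m2 = fun p => u2 p - pX (pX u2) p)
    (hn1 : n1 = fun p => v1 p - pX (pX v1) p)
    (hn2 : n2 = fun p => v2 p - pX (pX v2) p)
    (hf1 : f1 = fun p => u2 p - pX v1 p)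
    (hf2 : f2 = fun p => u1 p + pX v2 p)
    (hg1 : g1 = fun p => v2 p + pX u1 p)
    (hg2 : g2 = fun p => v1 p - pX u2 p)
    (hsys : ∀ p : ℝ × ℝ,
        pT m1 p + n2 p * g1 p * g2 p + m1 p * (f2 p * g2 p + 2 * f1 p * g1 p) = 0 ∧
        pT m2 p - n1 p * g1 p * g2 p - m2 p * (f1 p * g1 p + 2 * f2 p * g2 p) = 0 ∧
        pT n1 p - m2 p * f1 p * f2 p - n1 p * (f2 p * g2 p + 2 * f1 p * g1 p) = 0 ∧
        pT n2 p + m1 p * f1 p * f2 p + n2 p * (f1 p * g1 p + 2 * f2 p * g2 p) = 0) :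
    ∀ p : ℝ × ℝ, pT (fun q => m1 q * n1 q + m2 q * n2 q) p = 0 := by
  intro p
  have hderiv := ((hasDerivAt_pT_helmholtz hu1 hm1 p).mul (hasDerivAt_pT_helmholtz hv1 hn1 p)).add
    ((hasDerivAt_pT_helmholtz hu2 hm2 p).mul (hasDerivAt_pT_helmholtz hv2 hn2 p))
  obtain ⟨e1, e2, e3, e4⟩ := hsys p
  refine hderiv.deriv.trans ?_
  linear_combination n1 p * e1 + n2 p * e2 + m1 p * e3 + m2 p * e4
end

section
/- Let Γ : ℝ² → ℝ be smooth and suppose smooth functions (m1, m2, n1, n2) satisfy the system: ∂ₜm1 + ∂ₓ(Γ m1) − n2 Γ = 0, ∂ₜm2 + ∂ₓ(Γ m2) + n1 Γ = 0, ∂ₜn1 + ∂ₓ(Γ n1) + m2 Γ = 0, ∂ₜn2 + ∂ₓ(Γ n2) − m1 Γ = 0. Then P = m1 n1 + m2 n2 satisfies the identity ∂ₜP + Γ ∂ₓP + 2 (∂ₓΓ) P = 0 identically on ℝ². -/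
lemma pX_mul {f g : ℝ × ℝ → ℝ} (hf : Differentiable ℝ f) (hg : Differentiable ℝ g)
    (p : ℝ × ℝ) : pX (fun q => f q * g q) p = pX f p * g p + f p * pX g p :=
  deriv_fun_mul (c := fun x => f (x, p.2)) (d := fun x => g (x, p.2))
    (by fun_prop) (by fun_prop)

lemma pT_mul {f g : ℝ × ℝ → ℝ} (hf : Differentiable ℝ f) (hg : Differentiable ℝ g)
    (p : ℝ × ℝ) : pT (fun q => f q * g q) p = pT f p * g p + f p * pT g p :=
  deriv_fun_mul (c := fun t => f (p.1, t)) (d := fun t => g (p.1, t))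
    (by fun_prop) (by fun_prop)

lemma pX_add {f g : ℝ × ℝ → ℝ} (hf : Differentiable ℝ f) (hg : Differentiable ℝ g)
    (p : ℝ × ℝ) : pX (fun q => f q + g q) p = pX f p + pX g p :=
  deriv_fun_add (f := fun x => f (x, p.2)) (g := fun x => g (x, p.2))
    (by fun_prop) (by fun_prop)

lemma pT_add {f g : ℝ × ℝ → ℝ} (hf : Differentiable ℝ f) (hg : Differentiable ℝ g)
    (p : ℝ × ℝ) : pT (fun q => f q + g q) p = pT f p + pT g p :=
  deriv_fun_add (f := fun t => f (p.1, t)) (g := fun t => g (p.1, t))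
    (by fun_prop) (by fun_prop)

theorem stmt_4
    (m1 m2 n1 n2 Γ : ℝ × ℝ → ℝ)
    (hm1 : ContDiff ℝ (⊤ : ℕ∞) m1) (hm2 : ContDiff ℝ (⊤ : ℕ∞) m2)
    (hn1 : ContDiff ℝ (⊤ : ℕ∞) n1) (hn2 : ContDiff ℝ (⊤ : ℕ∞) n2)
    (hΓ : ContDiff ℝ (⊤ : ℕ∞) Γ)
    (hsys : ∀ p : ℝ × ℝ,
        pT m1 p + pX (fun q => Γ q * m1 q) p - n2 p * Γ p = 0 ∧
        pT m2 p + pX (fun q => Γ q * m2 q) p + n1 p * Γ p = 0 ∧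
        pT n1 p + pX (fun q => Γ q * n1 q) p + m2 p * Γ p = 0 ∧
        pT n2 p + pX (fun q => Γ q * n2 q) p - m1 p * Γ p = 0)
    (P : ℝ × ℝ → ℝ)
    (hP : P = fun q => m1 q * n1 q + m2 q * n2 q) :
    ∀ p : ℝ × ℝ, pT P p + Γ p * pX P p + 2 * pX Γ p * P p = 0 := by
  intro p
  have dm1 : Differentiable ℝ m1 := hm1.differentiable (by simp)
  have dm2 : Differentiable ℝ m2 := hm2.differentiable (by simp)
  have dn1 : Differentiable ℝ n1 := hn1.differentiable (by simp)
  have dn2 : Differentiable ℝ n2 := hn2.differentiable (by simp)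
  have dΓ : Differentiable ℝ Γ := hΓ.differentiable (by simp)
  obtain ⟨h1, h2, h3, h4⟩ := hsys p
  rw [pX_mul dΓ dm1] at h1
  rw [pX_mul dΓ dm2] at h2
  rw [pX_mul dΓ dn1] at h3
  rw [pX_mul dΓ dn2] at h4
  subst hP
  rw [pT_add (dm1.fun_mul dn1) (dm2.fun_mul dn2), pX_add (dm1.fun_mul dn1) (dm2.fun_mul dn2),
    pT_mul dm1 dn1, pT_mul dm2 dn2, pX_mul dm1 dn1, pX_mul dm2 dn2]
  linear_combination n1 p * h1 + n2 p * h2 + m1 p * h3 + m2 p * h4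
end

section
/- Let L > 0, let Γ : ℝ² → ℝ be smooth, and suppose smooth functions (m1, m2, n1, n2) satisfy the system ∂ₜm1 + ∂ₓ(Γ m1) − n2 Γ = 0, ∂ₜm2 + ∂ₓ(Γ m2) + n1 Γ = 0, ∂ₜn1 + ∂ₓ(Γ n1) + m2 Γ = 0, ∂ₜn2 + ∂ₓ(Γ n2) − m1 Γ = 0, where Γ, m1, m2, n1, n2 are all L-periodic in x (f(x + L, t) = f(x, t) for all x, t) and P = m1 n1 + m2 n2 > 0 everywhere. Then the quantity ρ₀(t) = ∫₀ᴸ √(m1 n1 + m2 n2)(x, t) dx is independent of t. -/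
open MeasureTheory

lemma hasDerivAt_slice_x {f : ℝ × ℝ → ℝ} {p : ℝ × ℝ} (hf : DifferentiableAt ℝ f p) :
    HasDerivAt (fun x => f (x, p.2)) (fderiv ℝ f p (1, 0)) p.1 :=
  HasFDerivAt.comp_hasDerivAt (f := fun x : ℝ => (x, p.2)) p.1 hf.hasFDerivAt
    ((hasDerivAt_id p.1).prodMk (hasDerivAt_const p.1 p.2))

lemma hasDerivAt_slice_t {f : ℝ × ℝ → ℝ} {p : ℝ × ℝ} (hf : DifferentiableAt ℝ f p) :
    HasDerivAt (fun t => f (p.1, t)) (fderiv ℝ f p (0, 1)) p.2 :=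
  HasFDerivAt.comp_hasDerivAt (f := fun t : ℝ => (p.1, t)) p.2 hf.hasFDerivAt
    ((hasDerivAt_const p.2 p.1).prodMk (hasDerivAt_id p.2))

/-- A density `g` whose flux `f` agrees at `x = 0` and `x = L` has conserved mass on `[0, L]`. -/
lemma integral_eq_of_conservation_law {f g : ℝ × ℝ → ℝ} {L : ℝ}
    (hf : Differentiable ℝ f) (hg : Differentiable ℝ g)
    (hdiv : ∀ p, fderiv ℝ f p (1, 0) + fderiv ℝ g p (0, 1) = 0)
    (hper : ∀ t, f (L, t) = f (0, t)) (t1 t2 : ℝ) :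
    ∫ x in (0 : ℝ)..L, g (x, t1) = ∫ x in (0 : ℝ)..L, g (x, t2) := by
  have h := integral2_divergence_prod_of_hasFDerivAt f g (fderiv ℝ f) (fderiv ℝ g)
    0 t1 L t2 hf.continuous.continuousOn hg.continuous.continuousOn
    (fun p _ => (hf p).hasFDerivAt) (fun p _ => (hg p).hasFDerivAt)
    (by simp only [hdiv]; exact integrableOn_zero)
  simp only [hdiv, hper, intervalIntegral.integral_zero] at h
  linarith

theorem stmt_6
    (L : ℝ) (hL : 0 < L)
    (m1 m2 n1 n2 Γ : ℝ × ℝ → ℝ)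
    (hm1 : ContDiff ℝ (⊤ : ℕ∞) m1) (hm2 : ContDiff ℝ (⊤ : ℕ∞) m2)
    (hn1 : ContDiff ℝ (⊤ : ℕ∞) n1) (hn2 : ContDiff ℝ (⊤ : ℕ∞) n2)
    (hΓ : ContDiff ℝ (⊤ : ℕ∞) Γ)
    (hsys : ∀ p : ℝ × ℝ,
        pT m1 p + pX (fun q => Γ q * m1 q) p - n2 p * Γ p = 0 ∧
        pT m2 p + pX (fun q => Γ q * m2 q) p + n1 p * Γ p = 0 ∧
        pT n1 p + pX (fun q => Γ q * n1 q) p + m2 p * Γ p = 0 ∧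
        pT n2 p + pX (fun q => Γ q * n2 q) p - m1 p * Γ p = 0)
    (hperm1 : ∀ x t : ℝ, m1 (x + L, t) = m1 (x, t))
    (hperm2 : ∀ x t : ℝ, m2 (x + L, t) = m2 (x, t))
    (hpern1 : ∀ x t : ℝ, n1 (x + L, t) = n1 (x, t))
    (hpern2 : ∀ x t : ℝ, n2 (x + L, t) = n2 (x, t))
    (hperΓ : ∀ x t : ℝ, Γ (x + L, t) = Γ (x, t))
    (hpos : ∀ p : ℝ × ℝ, 0 < m1 p * n1 p + m2 p * n2 p) :
    ∀ t1 t2 : ℝ,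
      (∫ x in (0:ℝ)..L,
          Real.sqrt (m1 (x, t1) * n1 (x, t1) + m2 (x, t1) * n2 (x, t1)))
        = ∫ x in (0:ℝ)..L,
            Real.sqrt (m1 (x, t2) * n1 (x, t2) + m2 (x, t2) * n2 (x, t2)) := by
  have dm1 : Differentiable ℝ m1 := hm1.differentiable (by simp)
  have dm2 : Differentiable ℝ m2 := hm2.differentiable (by simp)
  have dn1 : Differentiable ℝ n1 := hn1.differentiable (by simp)
  have dn2 : Differentiable ℝ n2 := hn2.differentiable (by simp)
  have dΓ : Differentiable ℝ Γ := hΓ.differentiable (by simp)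
  have dS : Differentiable ℝ fun p => Real.sqrt (m1 p * n1 p + m2 p * n2 p) := fun p =>
    DifferentiableAt.sqrt (by fun_prop) (hpos p).ne'
  refine integral_eq_of_conservation_law
    (f := fun p => Γ p * Real.sqrt (m1 p * n1 p + m2 p * n2 p))
    (g := fun p => Real.sqrt (m1 p * n1 p + m2 p * n2 p)) (dΓ.mul dS) dS (fun p => ?_) fun t => ?_
  · have hT {f : ℝ × ℝ → ℝ} (hf : Differentiable ℝ f) : pT f p = fderiv ℝ f p (0, 1) :=
      (hasDerivAt_slice_t (hf p)).deriv
    have hX {f : ℝ × ℝ → ℝ} (hf : Differentiable ℝ f) : pX (fun q => Γ q * f q) p =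
        fderiv ℝ Γ p (1, 0) * f p + Γ p * fderiv ℝ f p (1, 0) :=
      ((hasDerivAt_slice_x (dΓ p)).mul (hasDerivAt_slice_x (hf p))).deriv
    obtain ⟨e1, e2, e3, e4⟩ := hsys p
    rw [hT dm1, hX dm1] at e1
    rw [hT dm2, hX dm2] at e2
    rw [hT dn1, hX dn1] at e3
    rw [hT dn2, hX dn2] at e4
    have hP := ((dm1 p).hasFDerivAt.mul (dn1 p).hasFDerivAt).add
      ((dm2 p).hasFDerivAt.mul (dn2 p).hasFDerivAt)
    have hS := hP.sqrt (hpos p).ne'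
    have hF := (dΓ p).hasFDerivAt.mul hS
    have hF' := hF.fderiv
    have hS' := hS.fderiv
    simp only [Pi.mul_def, Pi.add_def] at hF' hS'
    rw [hF', hS']
    have hs := Real.sqrt_pos.2 (hpos p)
    have hsq := Real.sq_sqrt (hpos p).le
    simp only [add_apply, smul_apply, smul_eq_mul]
    set s := Real.sqrt (m1 p * n1 p + m2 p * n2 p)
    field_simp
    rw [hsq]
    linear_combination n1 p * e1 + n2 p * e2 + m1 p * e3 + m2 p * e4
  · have h0 := hperm1 0 t
    have h1 := hperm2 0 t
    have h2 := hpern1 0 t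
    have h3 := hpern2 0 t
    have h4 := hperΓ 0 t
    simp only [zero_add] at h0 h1 h2 h3 h4
    simp only [h0, h1, h2, h3, h4]
end
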